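/- arXiv:1511.04538 — 5 statements merged into one kernel-verified Lean document; each statement's English description precedes it below -/
import Mathlib

section
/- The image Ā((ℤ/Nℤ)²) of (ℤ/Nℤ)² under the map induced by A has cardinality |det B| = N²/|det A|. -/
/-- The map on `(ℤ/Nℤ)²` induced by matrix–vector multiplication (mod `N`)
by an integer matrix `M`. -/
def matBar (N : ℕ) (M : Matrix (Fin 2) (Fin 2) ℤ) :
    (Fin 2 → ZMod N) → (Fin 2 → ZMod N) :=
  fun v => (M.map (Int.cast : ℤ → ZMod N)).mulVec v

open Matrix

/-- An integer square matrix `M` with nonzero determinant has image of index `|det M|`. -/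
theorem card_quotient_range_mulVecLin {n : Type*} [Fintype n] [DecidableEq n]
    (M : Matrix n n ℤ) (hM : M.det ≠ 0) :
    Nat.card ((n → ℤ) ⧸ LinearMap.range M.mulVecLin) = M.det.natAbs := by
  have hinj : Function.Injective M.mulVecLin := mulVec_injective_of_det_ne_zero hM
  rw [← Submodule.natAbs_det_equiv _ (LinearEquiv.ofInjective M.mulVecLin hinj),
    ← LinearMap.det_toLin' M]
  rfl

/-- If `A * B = N`, then `A v` vanishes modulo `N` exactly when `v` is in the image of `B`. -/
theorem intCast_mulVec_eq_zero_iff {n : Type*} [Fintype n] [DecidableEq n] {N : ℕ}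
    {A B : Matrix n n ℤ} (hA : A.det ≠ 0) (hB : A * B = (N : ℤ) • (1 : Matrix n n ℤ))
    (v : n → ℤ) :
    (∀ i, ((A *ᵥ v) i : ZMod N) = 0) ↔ ∃ w, B *ᵥ w = v := by
  have hAB (w : n → ℤ) : A *ᵥ (B *ᵥ w) = (N : ℤ) • w := by
    rw [mulVec_mulVec, hB, smul_mulVec, one_mulVec]
  simp_rw [ZMod.intCast_zmod_eq_zero_iff_dvd]
  constructor
  · intro h
    choose w hw using h
    refine ⟨w, mulVec_injective_of_det_ne_zero hA ?_⟩
    ext i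
    simp [hAB, hw]
  · rintro ⟨w, rfl⟩ i
    simp [hAB]

/-- The image of `matBar N A` is the reduction modulo `N` of the lattice `A ℤ²`. -/
theorem range_matBar (N : ℕ) (A : Matrix (Fin 2) (Fin 2) ℤ) :
    Set.range (matBar N A) =
      Set.range fun (v : Fin 2 → ℤ) i ↦ ((A *ᵥ v) i : ZMod N) := by
  have hsurj : Function.Surjective fun (v : Fin 2 → ℤ) i ↦ (v i : ZMod N) :=
    ZMod.intCast_surjective.comp_left
  rw [← hsurj.range_comp]
  congr 1
  ext v i
  exact (RingHom.map_mulVec (Int.castRingHom (ZMod N)) A v i).symm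

/-- Let `N` be a positive integer and `A` an invertible `2×2` real matrix with integer
entries (encoded as an integer matrix with nonzero determinant) such that `B := N·A⁻¹`
also has integer entries (encoded as `A * B = N • 1`).  Then the image
`Ā((ℤ/Nℤ)²)` has cardinality `|det B| = N²/|det A|`. -/
theorem card_image_Abar (N : ℕ) (hN : 0 < N) (A B : Matrix (Fin 2) (Fin 2) ℤ)
    (hA : A.det ≠ 0) (hB : A * B = (N : ℤ) • (1 : Matrix (Fin 2) (Fin 2) ℤ)) :
    Nat.card (Set.range (matBar N A)) = B.det.natAbs ∧
      B.det.natAbs = N ^ 2 / A.det.natAbs := by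
  have hdet : A.det * B.det = (N : ℤ) ^ 2 := by
    rw [← det_mul, hB, det_smul, det_one, Fintype.card_fin, mul_one]
  have hdetB : B.det ≠ 0 := by
    intro h
    rw [h, mul_zero] at hdet
    exact pow_ne_zero 2 (Int.natCast_ne_zero.mpr hN.ne') hdet.symm
  constructor
  · let f : (Fin 2 → ℤ) →ₗ[ℤ] (Fin 2 → ZMod N) :=
      (Int.castAddHom (ZMod N)).toIntLinearMap.compLeft (Fin 2) ∘ₗ A.mulVecLin
    have hker : LinearMap.ker f = LinearMap.range B.mulVecLin := by
      ext v
      exact funext_iff.trans (intCast_mulVec_eq_zero_iff hA hB v)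
    rw [range_matBar, ← card_quotient_range_mulVecLin B hdetB, ← hker]
    exact (Nat.card_congr f.quotKerEquivRange.toEquiv).symm
  · rw [eq_comm]
    apply Nat.div_eq_of_eq_mul_right (Int.natAbs_pos.mpr hA)
    rw [← Int.natAbs_mul, hdet, Int.natAbs_pow, Int.natAbs_natCast]
end

section
/- The quotient group (ℤ/Nℤ)² / Ā((ℤ/Nℤ)²) has cardinality |det A|. -/
/-- The additive group homomorphism on `(ℤ/Nℤ)²` induced by matrix–vector
multiplication (mod `N`) by an integer matrix `M`. -/
def matBarHom (N : ℕ) (M : Matrix (Fin 2) (Fin 2) ℤ) :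
    (Fin 2 → ZMod N) →+ (Fin 2 → ZMod N) :=
  (Matrix.mulVecLin (M.map (Int.cast : ℤ → ZMod N))).toAddMonoidHom

/-- The range of an injective endomorphism of `ℤⁿ` given by an integer matrix has index the
absolute value of the determinant. -/
theorem Matrix.index_range_mulVecLin {n : Type*} [Fintype n] [DecidableEq n]
    (A : Matrix n n ℤ) (hA : A.det ≠ 0) :
    A.mulVecLin.toAddMonoidHom.range.index = A.det.natAbs := by
  have hinj : Function.Injective A.mulVecLin := Matrix.mulVec_injective_of_det_ne_zero hA
  have h := Submodule.natAbs_det_equiv A.mulVecLin.range (LinearEquiv.ofInjective _ hinj)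
  have hcomp : (A.mulVecLin.range.subtype ∘ₗ
      AddMonoidHom.toIntLinearMap (LinearEquiv.ofInjective _ hinj : _ →+ A.mulVecLin.range)) =
      Matrix.toLin' A := by
    ext
    rfl
  rw [hcomp, LinearMap.det_toLin'] at h
  exact h.symm

/-- If `A * B = N • 1`, then a vector of `ℤ²` lies in the image of `A` as soon as its reduction
modulo `N` lies in the image of the reduction of `A`. -/
theorem comap_range_matBarHom (N : ℕ) (A B : Matrix (Fin 2) (Fin 2) ℤ)
    (hB : A * B = (N : ℤ) • (1 : Matrix (Fin 2) (Fin 2) ℤ)) :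
    (matBarHom N A).range.comap ((Int.castAddHom (ZMod N)).compLeft (Fin 2)) =
      A.mulVecLin.toAddMonoidHom.range := by
  have hcast (w : Fin 2 → ℤ) : matBarHom N A (fun i => (w i : ZMod N)) =
      fun i => ((A.mulVec w i : ℤ) : ZMod N) := by
    ext i
    simp [matBarHom, Matrix.mulVec, dotProduct]
  ext v
  constructor
  · rintro ⟨w, hw⟩
    obtain ⟨w, rfl⟩ : ∃ u : Fin 2 → ℤ, (fun i => (u i : ZMod N)) = w :=
      ⟨fun i => (ZMod.intCast_surjective (w i)).choose,
        funext fun i => (ZMod.intCast_surjective (w i)).choose_spec⟩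
    rw [hcast] at hw
    have hdvd (i : Fin 2) : (N : ℤ) ∣ v i - A.mulVec w i :=
      (ZMod.intCast_eq_intCast_iff_dvd_sub _ _ _).mp (congrFun hw i)
    choose u hu using hdvd
    refine ⟨w + B.mulVec u, ?_⟩
    change A.mulVec (w + B.mulVec u) = v
    rw [Matrix.mulVec_add, Matrix.mulVec_mulVec, hB, Matrix.smul_mulVec, Matrix.one_mulVec]
    ext i
    simp only [Pi.add_apply, Pi.smul_apply, smul_eq_mul, ← hu]
    ring
  · rintro ⟨w, rfl⟩
    exact ⟨_, hcast w⟩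

/-- Let `N` be a positive integer and `A` an invertible `2×2` real matrix with integer
entries (encoded as an integer matrix with nonzero determinant) such that `B := N·A⁻¹`
also has integer entries (encoded as `A * B = N • 1`).  Then the quotient group
`(ℤ/Nℤ)² / Ā((ℤ/Nℤ)²)` has cardinality `|det A|`. -/
theorem card_quotient_Abar (N : ℕ) (hN : 0 < N) (A B : Matrix (Fin 2) (Fin 2) ℤ)
    (hA : A.det ≠ 0) (hB : A * B = (N : ℤ) • (1 : Matrix (Fin 2) (Fin 2) ℤ)) :
    Nat.card ((Fin 2 → ZMod N) ⧸ (matBarHom N A).range) = A.det.natAbs := by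
  rw [← Matrix.index_range_mulVecLin A hA, ← comap_range_matBarHom N A B hB,
    AddSubgroup.index_comap_of_surjective _ (ZMod.intCast_surjective.comp_left)]
  rfl
end

section
/- Let 𝔇 be a digit set for B and 𝔇* a digit set for C. Then for every k ∈ 𝔇, Σ_{m ∈ 𝔇*} e^{2πi⟨m, Ak⟩/N} equals |𝔇*| if k = 0 and equals 0 otherwise, where, in the exponent, m and k are represented by any integer lifts (the value e^{2πi⟨m, Ak⟩/N} is well defined since A has integer entries). -/
/-- `D` is a set of coset representatives for `B̄((ℤ/Nℤ)²)` in `(ℤ/Nℤ)²`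
containing `0`: it contains exactly one representative of each coset. -/
def IsDigitRep (N : ℕ) (B : Matrix (Fin 2) (Fin 2) ℤ)
    (D : Finset (Fin 2 → ZMod N)) : Prop :=
  (0 : Fin 2 → ZMod N) ∈ D ∧
    ∀ v : Fin 2 → ZMod N, ∃! d, d ∈ D ∧ v - d ∈ Set.range (matBar N B)

/-- The value `e^{2πi⟨m, Ak⟩/N}`, computed with integer lifts of `m` and `k`
(it is well defined since `A` has integer entries). -/
noncomputable def expChar (N : ℕ) (A : Matrix (Fin 2) (Fin 2) ℤ)
    (m k : Fin 2 → ZMod N) : ℂ :=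
  Complex.exp (2 * Real.pi * Complex.I *
    ((∑ i, ((m i).val : ℤ) * A.mulVec (fun j => ((k j).val : ℤ)) i : ℤ) : ℂ) / (N : ℂ))

/-- A character that is trivial on a subgroup `H` but not trivial on the whole group sums to zero
over any system of coset representatives of `H`. -/
theorem AddChar.sum_cosetReps_eq_zero {G R : Type*} [AddCommGroup G] [CommRing R] [IsDomain R]
    (H : AddSubgroup G) (D : Finset G) (hD : ∀ v, ∃! d, d ∈ D ∧ v - d ∈ H)
    (ψ : AddChar G R) (hψ : ∀ h ∈ H, ψ h = 1) {g : G} (hg : ψ g ≠ 1) :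
    ∑ m ∈ D, ψ m = 0 := by
  choose rep hrep huniq using hD
  have rep_eq {v d : G} (hd : d ∈ D) (h : v - d ∈ H) : rep v = d := (huniq v d ⟨hd, h⟩).symm
  have ψ_rep (v : G) : ψ (rep v) = ψ v := by
    conv_rhs => rw [← sub_add_cancel v (rep v), AddChar.map_add_eq_mul, hψ _ (hrep v).2, one_mul]
  have shift : ∑ m ∈ D, ψ g * ψ m = ∑ m ∈ D, ψ m := by
    refine Finset.sum_nbij' (fun m => rep (g + m)) (fun m => rep (m - g))
      (fun m _ => (hrep _).1) (fun m _ => (hrep _).1) (fun m hm => rep_eq hm ?_)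
      (fun m hm => rep_eq hm ?_) (fun m _ => ?_)
    · simpa [sub_sub] using H.neg_mem (hrep (g + m)).2
    · convert H.neg_mem (hrep (m - g)).2 using 1
      abel
    · rw [ψ_rep, AddChar.map_add_eq_mul]
  rw [← Finset.mul_sum] at shift
  exact (mul_left_eq_self₀.mp shift).resolve_left hg

theorem expChar_eq_stdAddChar (N : ℕ) [NeZero N] (A : Matrix (Fin 2) (Fin 2) ℤ)
    (m k : Fin 2 → ZMod N) :
    expChar N A m k = ZMod.stdAddChar (m ⬝ᵥ matBar N A k) := by
  have lift : m ⬝ᵥ matBar N A k =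
      ((∑ i, ((m i).val : ℤ) * A.mulVec (fun j => ((k j).val : ℤ)) i : ℤ) : ZMod N) := by
    simp [matBar, dotProduct, Matrix.mulVec]
  rw [lift, ZMod.stdAddChar_coe, expChar]

/-- If `A * B = N`, the range of `B̄ᵀ` is orthogonal modulo `N` to the range of `Ā`. -/
theorem matBar_transpose_dotProduct_matBar (N : ℕ) {A B : Matrix (Fin 2) (Fin 2) ℤ}
    (hA : A.det ≠ 0) (hB : A * B = (N : ℤ) • (1 : Matrix (Fin 2) (Fin 2) ℤ))
    (w k : Fin 2 → ZMod N) :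
    matBar N B.transpose w ⬝ᵥ matBar N A k = 0 := by
  have hBA : B * A = (N : ℤ) • (1 : Matrix (Fin 2) (Fin 2) ℤ) := by
    have h : A.det • (B * A) = A.det • ((N : ℤ) • (1 : Matrix (Fin 2) (Fin 2) ℤ)) := by
      calc A.det • (B * A) = A.adjugate * (A * B) * A := by
            rw [← Matrix.mul_assoc, Matrix.adjugate_mul, Matrix.smul_mul, Matrix.one_mul,
              Matrix.smul_mul]
        _ = A.det • ((N : ℤ) • (1 : Matrix (Fin 2) (Fin 2) ℤ)) := by
            rw [hB, Matrix.mul_smul, Matrix.mul_one, Matrix.smul_mul, Matrix.adjugate_mul,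
              smul_comm]
    exact smul_right_injective _ hA h
  have hmod : B.map (Int.cast : ℤ → ZMod N) * A.map (Int.cast : ℤ → ZMod N) = 0 := by
    have h := congrArg (fun M : Matrix (Fin 2) (Fin 2) ℤ => M.map (Int.castRingHom (ZMod N))) hBA
    simp only [Matrix.map_mul] at h
    refine h.trans ?_
    ext i j
    rw [Matrix.map_apply, Matrix.smul_apply, smul_eq_mul]
    simp
  rw [matBar, matBar, Matrix.transpose_map, Matrix.mulVec_transpose,
    ← Matrix.dotProduct_mulVec, Matrix.mulVec_mulVec, hmod, Matrix.zero_mulVec, dotProduct_zero]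

/-- Let `𝔇` be a digit set for `B` and `𝔇*` a digit set for `C = Bᵀ`.  Then for
every `k ∈ 𝔇`, the sum `Σ_{m ∈ 𝔇*} e^{2πi⟨m, Ak⟩/N}` equals `|𝔇*|` if `k = 0`
and `0` otherwise. -/
theorem character_sum_digits (N : ℕ) (hN : 0 < N) (A B : Matrix (Fin 2) (Fin 2) ℤ)
    (hA : A.det ≠ 0) (hB : A * B = (N : ℤ) • (1 : Matrix (Fin 2) (Fin 2) ℤ))
    (D : Finset (Fin 2 → ZMod N)) (hD : IsDigitRep N B D)
    (hinj : Set.InjOn (matBar N A) D)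
    (Dstar : Finset (Fin 2 → ZMod N)) (hDstar : IsDigitRep N B.transpose Dstar)
    (k : Fin 2 → ZMod N) (hk : k ∈ D) :
    ∑ m ∈ Dstar, expChar N A m k =
      if k = 0 then (Dstar.card : ℂ) else 0 := by
  have : NeZero N := ⟨hN.ne'⟩
  simp only [expChar_eq_stdAddChar]
  split_ifs with hk0
  · simp [hk0, matBar]
  have hAk : matBar N A k ≠ 0 := fun h =>
    hk0 (hinj hk hD.1 (by rw [h]; simp [matBar]))
  obtain ⟨i, hi⟩ := Function.ne_iff.mp hAk
  let ψ : AddChar (Fin 2 → ZMod N) ℂ :=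
    { toFun := fun m => ZMod.stdAddChar (m ⬝ᵥ matBar N A k)
      map_zero_eq_one' := by simp
      map_add_eq_mul' := fun a b => by rw [add_dotProduct, AddChar.map_add_eq_mul] }
  refine AddChar.sum_cosetReps_eq_zero
    (LinearMap.range
      (Matrix.mulVecLin (B.transpose.map (Int.cast : ℤ → ZMod N)))).toAddSubgroup
    Dstar hDstar.2 ψ ?_ (g := Pi.single i 1) ?_
  · rintro _ ⟨w, rfl⟩
    exact (congrArg ZMod.stdAddChar (matBar_transpose_dotProduct_matBar N hA hB w k)).trans
      (AddChar.map_zero_eq_one _)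
  · intro h
    apply hi
    apply ZMod.injective_stdAddChar
    rw [Pi.zero_apply, AddChar.map_zero_eq_one, ← h]
    change _ = ZMod.stdAddChar (Pi.single i 1 ⬝ᵥ matBar N A k)
    rw [single_one_dotProduct]
end

section
/- Let q := |det A| ≥ 2, let 𝔇 be a digit set for B, and let Φ = {φ₀,…,φ_{q−1}} ⊆ ℓ²(ℤ_N²). Fix any bijection γ : {0,…,q−1} → C̄((ℤ/Nℤ)²). Then 𝔅(Φ) = {T_{Āk} φ_p : k ∈ 𝔇, 0 ≤ p ≤ q−1} is an orthonormal basis of ℓ²(ℤ_N²) if and only if for every k ∈ (ℤ/Nℤ)² the q×q matrix S(k) with entries S(k)_{j,p} = (1/√q)·φ̂_p(k + γ(j)) (rows indexed by j, columns by p) is unitary. -/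
/-- The translation operator `T_k` on `ℓ²(ℤ_N²)`: `(T_k f)(m) = f(m − k)`. -/
def transl (N : ℕ) (k : Fin 2 → ZMod N) (f : (Fin 2 → ZMod N) → ℂ) :
    (Fin 2 → ZMod N) → ℂ :=
  fun m => f (m - k)

/-- The discrete Fourier transform on `ℓ²(ℤ_N²)`:
`f̂(m) = Σ_s f(s)·e^{−2πi⟨m,s⟩/N}`, computed with integer lifts in the exponent. -/
noncomputable def dft (N : ℕ) [NeZero N] (f : (Fin 2 → ZMod N) → ℂ)
    (m : Fin 2 → ZMod N) : ℂ :=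
  ∑ s : Fin 2 → ZMod N, f s *
    Complex.exp (-(2 * Real.pi * Complex.I) *
      ((∑ i, ((m i).val : ℤ) * ((s i).val : ℤ) : ℤ) : ℂ) / (N : ℂ))

/-- The inner product on `ℓ²(ℤ_N²)`: `⟨f, g⟩ = Σ_n f(n)·conj(g(n))`. -/
noncomputable def ip (N : ℕ) [NeZero N] (f g : (Fin 2 → ZMod N) → ℂ) : ℂ :=
  ∑ n : Fin 2 → ZMod N, f n * (starRingEnd ℂ) (g n)

/-- A family `b` indexed by `ι` is an orthonormal basis of `ℓ²(ℤ_N²)`: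
it is orthonormal and spans the whole space. -/
def IsONB (N : ℕ) [NeZero N] {ι : Type*} [Fintype ι] [DecidableEq ι]
    (b : ι → ((Fin 2 → ZMod N) → ℂ)) : Prop :=
  (∀ i j, ip N (b i) (b j) = if i = j then 1 else 0) ∧
    Submodule.span ℂ (Set.range b) = ⊤

open Matrix

section PlaneCharacters

variable {N : ℕ} [NeZero N]

/-- The character `s ↦ exp(2πi⟨m,s⟩/N)` of `(ℤ/Nℤ)²`. -/
noncomputable def planeChar (m : Fin 2 → ZMod N) : AddChar (Fin 2 → ZMod N) ℂ where
  toFun s := ZMod.stdAddChar (m ⬝ᵥ s)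
  map_zero_eq_one' := by simp
  map_add_eq_mul' s t := by rw [dotProduct_add, AddChar.map_add_eq_mul]

theorem planeChar_apply (m s : Fin 2 → ZMod N) :
    planeChar m s = ZMod.stdAddChar (m ⬝ᵥ s) := rfl

theorem planeChar_comm (m s : Fin 2 → ZMod N) : planeChar m s = planeChar s m := by
  rw [planeChar_apply, planeChar_apply, dotProduct_comm]

theorem planeChar_eq_zero_iff (m : Fin 2 → ZMod N) : planeChar m = 0 ↔ m = 0 := by
  constructor
  · intro h
    funext i
    have h1 : planeChar m (Pi.single i 1) = 1 := by rw [h]; rfl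
    rw [planeChar_apply, dotProduct_single, mul_one] at h1
    exact ZMod.injective_stdAddChar (h1.trans (AddChar.map_zero_eq_one _).symm)
  · rintro rfl
    ext s
    simp [planeChar_apply]

theorem sum_planeChar (m : Fin 2 → ZMod N) :
    ∑ s, planeChar m s = if m = 0 then (N : ℂ) ^ 2 else 0 := by
  classical
  rw [AddChar.sum_eq_ite]
  simp [planeChar_eq_zero_iff, ZMod.card]

theorem conj_planeChar (m s : Fin 2 → ZMod N) :
    (starRingEnd ℂ) (planeChar m s) = planeChar m (-s) := by
  rw [AddChar.map_neg_eq_conj]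

theorem planeChar_mulVec (M : Matrix (Fin 2) (Fin 2) (ZMod N)) (m s : Fin 2 → ZMod N) :
    planeChar m (M *ᵥ s) = planeChar (Mᵀ *ᵥ m) s := by
  rw [planeChar_apply, planeChar_apply, dotProduct_mulVec, mulVec_transpose]

theorem dft_eq_sum_planeChar (f : (Fin 2 → ZMod N) → ℂ) (m : Fin 2 → ZMod N) :
    dft N f m = ∑ s, f s * planeChar m (-s) := by
  unfold dft
  refine Finset.sum_congr rfl fun s _ => ?_
  congr 1
  have h : m ⬝ᵥ (-s) =
      ((-(∑ i, ((m i).val : ℤ) * ((s i).val : ℤ)) : ℤ) : ZMod N) := by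
    simp [dotProduct]
  rw [planeChar_apply, h, ZMod.stdAddChar_coe]
  congr 1
  push_cast
  ring

theorem dft_transl (h : Fin 2 → ZMod N) (f : (Fin 2 → ZMod N) → ℂ) (m : Fin 2 → ZMod N) :
    dft N (transl N h f) m = planeChar m (-h) * dft N f m := by
  rw [dft_eq_sum_planeChar, dft_eq_sum_planeChar, Finset.mul_sum]
  refine Fintype.sum_equiv (Equiv.subRight h) _ _ fun s => ?_
  have : -s = -h + -(s - h) := by abel
  rw [this, AddChar.map_add_eq_mul]
  simp only [transl, Equiv.subRight_apply]
  ring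

/-- Parseval's identity. -/
theorem sum_dft_mul_conj_dft (f g : (Fin 2 → ZMod N) → ℂ) :
    ∑ m, dft N f m * (starRingEnd ℂ) (dft N g m) = (N : ℂ) ^ 2 * ip N f g := by
  have expand : ∀ m, dft N f m * (starRingEnd ℂ) (dft N g m) =
      ∑ s, ∑ t, f s * (starRingEnd ℂ) (g t) * planeChar (t - s) m := by
    intro m
    rw [dft_eq_sum_planeChar, dft_eq_sum_planeChar, map_sum, Finset.sum_mul_sum]
    refine Finset.sum_congr rfl fun s _ => Finset.sum_congr rfl fun t _ => ?_
    rw [map_mul, conj_planeChar, neg_neg, planeChar_comm (t - s), sub_eq_neg_add,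
      AddChar.map_add_eq_mul]
    ring
  simp_rw [expand]
  rw [Finset.sum_comm, ip, Finset.mul_sum]
  refine Finset.sum_congr rfl fun s _ => ?_
  rw [Finset.sum_comm]
  simp_rw [← Finset.mul_sum, sum_planeChar, sub_eq_zero]
  simp [mul_comm]

theorem ip_transl_transl (a b : Fin 2 → ZMod N) (f g : (Fin 2 → ZMod N) → ℂ) :
    ip N (transl N a f) (transl N b g) = ip N (transl N (a - b) f) g := by
  refine Fintype.sum_equiv (Equiv.subRight b) _ _ fun s => ?_
  simp only [transl, Equiv.subRight_apply]
  congr 2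
  abel

theorem sum_planeChar_mul_dft_mul_conj_dft (h : Fin 2 → ZMod N)
    (f g : (Fin 2 → ZMod N) → ℂ) :
    ∑ m, planeChar m (-h) * (dft N f m * (starRingEnd ℂ) (dft N g m)) =
      (N : ℂ) ^ 2 * ip N (transl N h f) g := by
  rw [← sum_dft_mul_conj_dft]
  simp_rw [dft_transl, mul_assoc]

theorem natCast_sq_ne_zero : (N : ℂ) ^ 2 ≠ 0 :=
  pow_ne_zero _ (Nat.cast_ne_zero.mpr (NeZero.ne N))

/-- Poisson summation along the image of a matrix `M` modulo `N`. -/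
theorem sum_ip_transl_mulVec (M : Matrix (Fin 2) (Fin 2) (ZMod N))
    (f g : (Fin 2 → ZMod N) → ℂ) (k : Fin 2 → ZMod N) :
    ∑ v, ip N (transl N (M *ᵥ v) f) g * planeChar k (M *ᵥ v) =
      ∑ x with Mᵀ *ᵥ x = 0, dft N f (k + x) * (starRingEnd ℂ) (dft N g (k + x)) := by
  apply mul_left_cancel₀ (natCast_sq_ne_zero (N := N))
  rw [Finset.mul_sum]
  simp_rw [← mul_assoc, ← sum_planeChar_mul_dft_mul_conj_dft]
  simp_rw [Finset.sum_mul]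
  rw [Finset.sum_comm, Finset.mul_sum, Finset.sum_filter]
  symm
  refine Fintype.sum_equiv (Equiv.addLeft k) _ _ fun x => ?_
  have char_eq : ∀ v, planeChar (k + x) (-(M *ᵥ v)) *
      (dft N f (k + x) * (starRingEnd ℂ) (dft N g (k + x))) * planeChar k (M *ᵥ v) =
      (dft N f (k + x) * (starRingEnd ℂ) (dft N g (k + x))) * planeChar (-(Mᵀ *ᵥ x)) v := by
    intro v
    have : planeChar (-(Mᵀ *ᵥ x)) v =
        planeChar (k + x) (-(M *ᵥ v)) * planeChar k (M *ᵥ v) := by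
      rw [← mulVec_neg, ← planeChar_mulVec]
      simp only [planeChar_apply, ← AddChar.map_add_eq_mul]
      congr 1
      simp only [dotProduct_neg, add_dotProduct, neg_dotProduct]
      ring
    rw [this]
    ring
  simp only [Equiv.coe_addLeft]
  simp_rw [char_eq]
  rw [← Finset.mul_sum, sum_planeChar]
  simp only [neg_eq_zero]
  split_ifs <;> ring

theorem card_ker_transpose (M : Matrix (Fin 2) (Fin 2) (ZMod N)) :
    (Finset.univ.filter fun x => Mᵀ *ᵥ x = 0).card =
      (Finset.univ.filter fun x => M *ᵥ x = 0).card := by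
  have double_count : ∑ m, ∑ s, planeChar m (M *ᵥ s) =
      ∑ s, ∑ m, planeChar (M *ᵥ s) m := by
    rw [Finset.sum_comm]
    simp_rw [planeChar_comm (M *ᵥ _)]
  simp_rw [planeChar_mulVec, sum_planeChar, ← Finset.sum_filter] at double_count
  simp only [Finset.sum_const, nsmul_eq_mul] at double_count
  exact_mod_cast mul_right_cancel₀ natCast_sq_ne_zero double_count

/-- The correlations of `f` and `g` along the image of `M` form a multiple of the unit impulse
iff the spectral correlations are constant on the cosets of the kernel of `Mᵀ`. -/
theorem ip_transl_mulVec_eq_iff (M : Matrix (Fin 2) (Fin 2) (ZMod N))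
    (f g : (Fin 2 → ZMod N) → ℂ) (c : ℂ) :
    (∀ v, ip N (transl N (M *ᵥ v) f) g = if M *ᵥ v = 0 then c else 0) ↔
      ∀ k, ∑ x with Mᵀ *ᵥ x = 0, dft N f (k + x) * (starRingEnd ℂ) (dft N g (k + x)) =
        (Finset.univ.filter fun x => Mᵀ *ᵥ x = 0).card * c := by
  constructor
  · intro H k
    rw [← sum_ip_transl_mulVec, card_ker_transpose, ← nsmul_eq_mul, ← Finset.sum_const,
      Finset.sum_filter]
    refine Finset.sum_congr rfl fun v _ => ?_
    rw [H]
    split_ifs with hv <;> simp [hv]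
  · intro H v
    set K := Finset.univ.filter fun x => Mᵀ *ᵥ x = 0 with hK
    have hcard : (K.card : ℂ) ≠ 0 :=
      Nat.cast_ne_zero.mpr (Finset.card_ne_zero_of_mem (a := 0) (by simp [hK]))
    have average : ∑ k, planeChar k (-(M *ᵥ v)) *
          (∑ x ∈ K, dft N f (k + x) * (starRingEnd ℂ) (dft N g (k + x))) =
        K.card * ((N : ℂ) ^ 2 * ip N (transl N (M *ᵥ v) f) g) := by
      simp_rw [Finset.mul_sum]
      rw [Finset.sum_comm, ← nsmul_eq_mul, ← Finset.sum_const]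
      refine Finset.sum_congr rfl fun x hx => ?_
      rw [← sum_planeChar_mul_dft_mul_conj_dft]
      refine Fintype.sum_equiv (Equiv.addRight x) _ _ fun k => ?_
      have hx0 : Mᵀ *ᵥ x = 0 := by simpa [hK] using hx
      have : planeChar (k + x) (-(M *ᵥ v)) = planeChar k (-(M *ᵥ v)) := by
        rw [← mulVec_neg, planeChar_mulVec, planeChar_mulVec, mulVec_add, hx0, add_zero]
      simp only [Equiv.coe_addRight, this]
    simp_rw [H, ← Finset.sum_mul, planeChar_comm _ (-(M *ᵥ v)), sum_planeChar] at average
    apply mul_left_cancel₀ (natCast_sq_ne_zero (N := N))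
    apply mul_left_cancel₀ hcard
    rw [← average]
    simp only [neg_eq_zero]
    split_ifs <;> ring

theorem span_eq_top_of_orthonormal_of_card {ι : Type*} [Fintype ι] [DecidableEq ι]
    (b : ι → ((Fin 2 → ZMod N) → ℂ))
    (hb : ∀ i j, ip N (b i) (b j) = if i = j then 1 else 0)
    (hcard : Fintype.card ι = N ^ 2) : Submodule.span ℂ (Set.range b) = ⊤ := by
  have hli : LinearIndependent ℂ b := by
    rw [Fintype.linearIndependent_iff]
    intro c hc i
    have h0 : ip N (∑ j, c j • b j) (b i) = 0 := by rw [hc]; simp [ip]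
    have h1 : ip N (∑ j, c j • b j) (b i) = ∑ j, c j * ip N (b j) (b i) := by
      simp only [ip, Finset.sum_apply, Pi.smul_apply, smul_eq_mul, Finset.sum_mul,
        Finset.mul_sum]
      rw [Finset.sum_comm]
      simp only [mul_assoc]
    rw [h1] at h0
    simpa [hb] using h0
  exact hli.span_eq_top_of_card_eq_finrank' (by simp [hcard, ZMod.card])

end PlaneCharacters

section KernelImage

variable {N : ℕ} {A B : Matrix (Fin 2) (Fin 2) ℤ}

theorem map_intCast_mul_eq_zero (h : A * B = (N : ℤ) • (1 : Matrix (Fin 2) (Fin 2) ℤ)) :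
    A.map (Int.cast : ℤ → ZMod N) * B.map (Int.cast : ℤ → ZMod N) = 0 := by
  have := congrArg (fun M => M.map (Int.castRingHom (ZMod N))) h
  simp only [Matrix.map_mul] at this
  refine this.trans ?_
  ext i j
  simp only [map_apply, Matrix.smul_apply, smul_eq_mul]
  simp

theorem mul_comm_of_mul_eq_smul_one (h : A * B = (N : ℤ) • (1 : Matrix (Fin 2) (Fin 2) ℤ))
    (hA : A.det ≠ 0) : B * A = (N : ℤ) • (1 : Matrix (Fin 2) (Fin 2) ℤ) := by
  have key : A.det • (B * A) = A.det • ((N : ℤ) • (1 : Matrix (Fin 2) (Fin 2) ℤ)) := by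
    calc
      A.det • (B * A) = (A.adjugate * A) * B * A := by
        rw [adjugate_mul, Matrix.smul_mul, Matrix.one_mul, Matrix.smul_mul]
      _ = A.adjugate * (A * B) * A := by simp only [Matrix.mul_assoc]
      _ = (N : ℤ) • (A.adjugate * A) := by
        rw [h, Matrix.mul_smul, Matrix.mul_one, Matrix.smul_mul]
      _ = _ := by rw [adjugate_mul, smul_comm]
  exact smul_right_injective _ hA key

/-- If `A * B = N`, then the kernel of `A` modulo `N` is the image of `B` modulo `N`. -/
theorem matBar_eq_zero_iff_mem_range [NeZero N]
    (h : A * B = (N : ℤ) • (1 : Matrix (Fin 2) (Fin 2) ℤ)) (hA : A.det ≠ 0)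
    (x : Fin 2 → ZMod N) : matBar N A x = 0 ↔ x ∈ Set.range (matBar N B) := by
  constructor
  · intro hx
    have hlift : ∃ y : Fin 2 → ℤ, (fun i => (y i : ZMod N)) = x :=
      ⟨fun i => (x i).val, by funext i; simp⟩
    obtain ⟨y, rfl⟩ := hlift
    have hdvd : ∀ i, (N : ℤ) ∣ (A *ᵥ y) i := by
      intro i
      rw [← ZMod.intCast_zmod_eq_zero_iff_dvd]
      have := congrFun hx i
      simpa [matBar, mulVec, dotProduct] using this
    choose w hw using hdvd
    refine ⟨fun i => (w i : ZMod N), ?_⟩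
    have hy : y = B *ᵥ w := by
      have hN : (N : ℤ) ≠ 0 := Nat.cast_ne_zero.mpr (NeZero.ne N)
      have hAy : A *ᵥ y = (N : ℤ) • w := funext fun i => by simp [hw i]
      apply smul_right_injective _ hN
      have := congrArg (fun z => B *ᵥ z) hAy
      simpa only [mulVec_mulVec, mulVec_smul, mul_comm_of_mul_eq_smul_one h hA, smul_mulVec,
        one_mulVec] using this
    funext i
    rw [hy]
    simp [matBar, mulVec, dotProduct]
  · rintro ⟨w, rfl⟩
    simp only [matBar, mulVec_mulVec, map_intCast_mul_eq_zero h, zero_mulVec]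

theorem matBar_sub (M : Matrix (Fin 2) (Fin 2) ℤ) (x y : Fin 2 → ZMod N) :
    matBar N M (x - y) = matBar N M x - matBar N M y :=
  mulVec_sub _ _ _

theorem IsDigitRep.exists_matBar_eq [NeZero N] {D : Finset (Fin 2 → ZMod N)} (hD : IsDigitRep N B D)
    (h : A * B = (N : ℤ) • (1 : Matrix (Fin 2) (Fin 2) ℤ)) (hA : A.det ≠ 0)
    (v : Fin 2 → ZMod N) : ∃ d ∈ D, matBar N A (v - d) = 0 := by
  obtain ⟨d, ⟨hd, hv⟩, -⟩ := hD.2 v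
  exact ⟨d, hd, (matBar_eq_zero_iff_mem_range h hA _).mpr hv⟩

theorem IsDigitRep.card_mul_card_ker [NeZero N] {D : Finset (Fin 2 → ZMod N)} (hD : IsDigitRep N B D)
    (h : A * B = (N : ℤ) • (1 : Matrix (Fin 2) (Fin 2) ℤ)) (hA : A.det ≠ 0)
    (hinj : Set.InjOn (matBar N A) D) :
    D.card * (Finset.univ.filter fun x => matBar N A x = 0).card = N ^ 2 := by
  have hV : (Finset.univ : Finset (Fin 2 → ZMod N)).card = N ^ 2 := by simp [ZMod.card]
  rw [← hV, ← Finset.card_product]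
  refine Finset.card_bij (fun p _ => p.1 + p.2) (fun _ _ => Finset.mem_univ _) ?_ ?_
  · rintro ⟨d, x⟩ hp ⟨d', x'⟩ hp' hsum
    simp only [Finset.mem_product, Finset.mem_filter, Finset.mem_univ, true_and] at hp hp'
    have hdd : d = d' := by
      apply hinj hp.1 hp'.1
      have h1 : d - d' = x' - x := by
        rw [sub_eq_sub_iff_add_eq_add, add_comm x' d']; exact hsum
      rw [← sub_eq_zero, ← matBar_sub, h1, matBar_sub, hp.2, hp'.2, sub_zero]
    subst hdd
    exact Prod.ext rfl (add_left_cancel hsum)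
  · intro v _
    obtain ⟨d, hd, hv⟩ := hD.exists_matBar_eq h hA v
    exact ⟨(d, v - d), by simp [hd, hv], by simp⟩

/-- The characterization of orthonormal bases of translates by unitary system matrices, with the
number `q` of generators determined only by the enumeration `γ` of the image of `Bᵀ`. -/
theorem isONB_transl_iff_forall_mem_unitaryGroup [NeZero N] (hA : A.det ≠ 0)
    (hB : A * B = (N : ℤ) • (1 : Matrix (Fin 2) (Fin 2) ℤ)) {q : ℕ} (hq : q ≠ 0)
    {D : Finset (Fin 2 → ZMod N)} (hD : IsDigitRep N B D) (hinj : Set.InjOn (matBar N A) D)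
    (φ : Fin q → ((Fin 2 → ZMod N) → ℂ)) {γ : Fin q → (Fin 2 → ZMod N)}
    (hγinj : Function.Injective γ) (hγrange : Set.range γ = Set.range (matBar N Bᵀ)) :
    IsONB N (fun kp : ↥D × Fin q => transl N (matBar N A ↑kp.1) (φ kp.2)) ↔
      ∀ k : Fin 2 → ZMod N,
        (Matrix.of fun j p : Fin q => (1 / Real.sqrt q : ℂ) * dft N (φ p) (k + γ j)) ∈
          Matrix.unitaryGroup (Fin q) ℂ := by
  set a : Matrix (Fin 2) (Fin 2) (ZMod N) := A.map Int.cast with ha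
  have hbar : ∀ v, matBar N A v = a *ᵥ v := fun _ => rfl
  have hBt : Aᵀ * Bᵀ = (N : ℤ) • (1 : Matrix (Fin 2) (Fin 2) ℤ) := by
    rw [← transpose_mul, mul_comm_of_mul_eq_smul_one hB hA]
    simp
  have himage : Finset.univ.image γ = Finset.univ.filter fun x => aᵀ *ᵥ x = 0 := by
    ext x
    have h1 := matBar_eq_zero_iff_mem_range hBt (by rwa [det_transpose]) x
    rw [← hγrange] at h1
    simpa only [Finset.mem_image, Finset.mem_univ, true_and, Finset.mem_filter,
      Set.mem_range, matBar, ha, transpose_map] using h1.symm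
  have hker : (Finset.univ.filter fun x => aᵀ *ᵥ x = 0).card = q := by
    rw [← himage, Finset.card_image_of_injective _ hγinj, Finset.card_fin]
  have hcard : Fintype.card (↥D × Fin q) = N ^ 2 := by
    rw [Fintype.card_prod, Fintype.card_coe, Fintype.card_fin, ← hker, card_ker_transpose]
    exact hD.card_mul_card_ker hB hA hinj
  have hq0 : (q : ℂ) ≠ 0 := Nat.cast_ne_zero.mpr hq
  have horth : IsONB N (fun kp : ↥D × Fin q => transl N (matBar N A ↑kp.1) (φ kp.2)) ↔
      ∀ p p' v, ip N (transl N (a *ᵥ v) (φ p)) (φ p') =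
        if a *ᵥ v = 0 then (if p = p' then 1 else 0) else 0 := by
    constructor
    · intro H p p' v
      obtain ⟨d, hd, hvd⟩ := hD.exists_matBar_eq hB hA v
      have hv : a *ᵥ v = matBar N A d := by
        rwa [matBar_sub, sub_eq_zero] at hvd
      have h0 : matBar N A 0 = 0 := mulVec_zero _
      have h1 := H.1 (⟨d, hd⟩, p) (⟨0, hD.1⟩, p')
      have h2 : matBar N A d = 0 ↔ d = 0 :=
        ⟨fun h => hinj hd hD.1 (h.trans h0.symm), fun h => h ▸ h0⟩
      simp only [ip_transl_transl, h0, sub_zero] at h1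
      rw [hv, h1]
      simp only [Prod.mk.injEq, Subtype.mk.injEq, h2, ite_and]
    · intro H
      have hon : ∀ i j : ↥D × Fin q, ip N (transl N (matBar N A ↑i.1) (φ i.2))
          (transl N (matBar N A ↑j.1) (φ j.2)) = if i = j then 1 else 0 := by
        rintro ⟨d, p⟩ ⟨d', p'⟩
        have h2 : matBar N A (↑d - ↑d') = 0 ↔ d = d' := by
          rw [matBar_sub, sub_eq_zero]
          exact ⟨fun h => Subtype.ext (hinj d.2 d'.2 h), fun h => h ▸ rfl⟩
        rw [ip_transl_transl, ← matBar_sub, hbar, H, ← hbar]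
        simp only [Prod.mk.injEq, h2, ite_and]
      exact ⟨hon, span_eq_top_of_orthonormal_of_card _ hon hcard⟩
  have hunit : ∀ k, (Matrix.of fun j p : Fin q =>
        (1 / Real.sqrt q : ℂ) * dft N (φ p) (k + γ j)) ∈ Matrix.unitaryGroup (Fin q) ℂ ↔
      ∀ p p', ∑ x with aᵀ *ᵥ x = 0,
        dft N (φ p) (k + x) * (starRingEnd ℂ) (dft N (φ p') (k + x)) =
          q * if p = p' then 1 else 0 := by
    intro k
    rw [mem_unitaryGroup_iff', ← Matrix.ext_iff, forall_comm]
    refine forall_congr' fun p => forall_congr' fun p' => ?_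
    have hsqrt : (Real.sqrt q : ℂ) * Real.sqrt q = q := by
      rw [← Complex.ofReal_mul, Real.mul_self_sqrt (Nat.cast_nonneg _), Complex.ofReal_natCast]
    have hs0 : (Real.sqrt q : ℂ) ≠ 0 := fun h => hq0 (by rw [← hsqrt, h, zero_mul])
    have hentry : ∑ x with aᵀ *ᵥ x = 0,
        dft N (φ p) (k + x) * (starRingEnd ℂ) (dft N (φ p') (k + x)) =
        q * (star (Matrix.of fun j p : Fin q =>
          (1 / Real.sqrt q : ℂ) * dft N (φ p) (k + γ j)) * (Matrix.of fun j p : Fin q =>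
          (1 / Real.sqrt q : ℂ) * dft N (φ p) (k + γ j))) p' p := by
      rw [← himage, Finset.sum_image hγinj.injOn, Matrix.mul_apply, Finset.mul_sum]
      refine Finset.sum_congr rfl fun j _ => ?_
      simp only [star_apply, of_apply, star_mul', RCLike.star_def, map_div₀, map_one,
        Complex.conj_ofReal]
      rw [← hsqrt]
      field_simp
    rw [hentry, Matrix.one_apply, mul_right_inj' hq0]
    simp only [eq_comm (a := p)]
  rw [horth]
  simp_rw [hunit, ip_transl_mulVec_eq_iff, hker]
  exact ⟨fun H k p p' => H p p' k, fun H p p' k => H k p p'⟩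

end KernelImage

/-- Let `q = |det A| ≥ 2`, let `𝔇` be a digit set for `B`, let
`Φ = {φ₀, …, φ_{q−1}} ⊆ ℓ²(ℤ_N²)`, and fix a bijection `γ` from `{0,…,q−1}` onto
`C̄((ℤ/Nℤ)²)`, where `C = Bᵀ`.  Then `𝔅(Φ) = {T_{Āk} φ_p : k ∈ 𝔇, 0 ≤ p ≤ q−1}`
is an orthonormal basis of `ℓ²(ℤ_N²)` if and only if for every `k ∈ (ℤ/Nℤ)²` the
`q×q` system matrix `S(k)` with entries `S(k)_{j,p} = (1/√q)·φ̂_p(k + γ(j))`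
is unitary. -/
theorem onws_iff_system_matrix_unitary (N : ℕ) [NeZero N]
    (A B : Matrix (Fin 2) (Fin 2) ℤ) (hA : A.det ≠ 0)
    (hB : A * B = (N : ℤ) • (1 : Matrix (Fin 2) (Fin 2) ℤ))
    (hq : 2 ≤ A.det.natAbs)
    (D : Finset (Fin 2 → ZMod N)) (hD : IsDigitRep N B D)
    (hinj : Set.InjOn (matBar N A) D)
    (φ : Fin (A.det.natAbs) → ((Fin 2 → ZMod N) → ℂ))
    (γ : Fin (A.det.natAbs) → (Fin 2 → ZMod N))
    (hγinj : Function.Injective γ)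
    (hγrange : Set.range γ = Set.range (matBar N B.transpose)) :
    IsONB N (fun kp : ↥D × Fin (A.det.natAbs) =>
        transl N (matBar N A ↑kp.1) (φ kp.2)) ↔
      ∀ k : Fin 2 → ZMod N,
        (Matrix.of fun j p : Fin (A.det.natAbs) =>
            (1 / Real.sqrt (A.det.natAbs) : ℂ) * dft N (φ p) (k + γ j)) ∈
          Matrix.unitaryGroup (Fin (A.det.natAbs)) ℂ := by
  exact isONB_transl_iff_forall_mem_unitaryGroup hA hB (by omega) hD hinj φ hγinj hγrange
end

section
/- Let V be a finite-dimensional complex inner product space and let (b_i)_{i∈I} and (c_j)_{j∈J} be two orthonormal bases of V (with I, J finite). Set μ := max{|⟨b_i, c_j⟩| : i ∈ I, j ∈ J}. Then: (a) μ ≥ 1/√(dim V); and (b) for every nonzero f ∈ V, (#{i ∈ I : ⟨f, b_i⟩ ≠ 0})·(#{j ∈ J : ⟨f, c_j⟩ ≠ 0}) ≥ 1/μ². -/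
open scoped InnerProductSpace

/-- If every coefficient of `x` in the orthonormal basis `b` has modulus at most `μ`, then
`|⟨f, x⟩|²` is at most `μ² ‖f‖²` times the number of nonzero coefficients of `f` in `b`. -/
theorem OrthonormalBasis.norm_inner_sq_le_ncard_mul {V I : Type*} [NormedAddCommGroup V]
    [InnerProductSpace ℂ V] [Fintype I] (b : OrthonormalBasis I ℂ V) {μ : ℝ} (f x : V)
    (hx : ∀ i, ‖⟪b i, x⟫_ℂ‖ ≤ μ) :
    ‖⟪f, x⟫_ℂ‖ ^ 2 ≤ ({i : I | ⟪f, b i⟫_ℂ ≠ 0}.ncard : ℝ) * (μ ^ 2 * ‖f‖ ^ 2) := by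
  classical
  set A : Finset I := {i | ⟪f, b i⟫_ℂ ≠ 0}
  have hA : {i : I | ⟪f, b i⟫_ℂ ≠ 0}.ncard = A.card := by
    rw [← Set.ncard_coe_finset]
    simp [A]
  have hsum : ⟪f, x⟫_ℂ = ∑ i ∈ A, ⟪f, b i⟫_ℂ * ⟪b i, x⟫_ℂ := by
    rw [← b.sum_inner_mul_inner f x]
    refine (Finset.sum_subset (Finset.subset_univ A) fun i _ hi => ?_).symm
    have h0 : ⟪f, b i⟫_ℂ = 0 := by simpa [A] using hi
    rw [h0, zero_mul]
  have hnorm : ‖⟪f, x⟫_ℂ‖ ≤ ∑ i ∈ A, ‖⟪f, b i⟫_ℂ‖ * μ := by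
    rw [hsum]
    refine (norm_sum_le _ _).trans (Finset.sum_le_sum fun i _ => ?_)
    rw [norm_mul]
    exact mul_le_mul_of_nonneg_left (hx i) (norm_nonneg _)
  calc ‖⟪f, x⟫_ℂ‖ ^ 2 ≤ (∑ i ∈ A, ‖⟪f, b i⟫_ℂ‖ * μ) ^ 2 := by gcongr
    _ ≤ A.card * ∑ i ∈ A, (‖⟪f, b i⟫_ℂ‖ * μ) ^ 2 := sq_sum_le_card_mul_sum_sq
    _ ≤ A.card * ∑ i, (‖⟪f, b i⟫_ℂ‖ * μ) ^ 2 := by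
      gcongr
      exact Finset.subset_univ A
    _ = _ := by
      simp_rw [mul_pow]
      rw [← Finset.sum_mul, b.sum_sq_norm_inner_left, hA, mul_comm (‖f‖ ^ 2)]

/-- The squared norm of `f` is at most `C` times the number of its nonzero coefficients in the
orthonormal basis `c`, if all these coefficients have squared modulus at most `C`. -/
theorem OrthonormalBasis.norm_sq_le_ncard_mul {V J : Type*} [NormedAddCommGroup V]
    [InnerProductSpace ℂ V] [Fintype J] (c : OrthonormalBasis J ℂ V) {C : ℝ} (f : V)
    (hf : ∀ j, ‖⟪f, c j⟫_ℂ‖ ^ 2 ≤ C) :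
    ‖f‖ ^ 2 ≤ ({j : J | ⟪f, c j⟫_ℂ ≠ 0}.ncard : ℝ) * C := by
  classical
  set B : Finset J := {j | ⟪f, c j⟫_ℂ ≠ 0}
  have hB : {j : J | ⟪f, c j⟫_ℂ ≠ 0}.ncard = B.card := by
    rw [← Set.ncard_coe_finset]
    simp [B]
  have hsum : ‖f‖ ^ 2 = ∑ j ∈ B, ‖⟪f, c j⟫_ℂ‖ ^ 2 := by
    rw [← c.sum_sq_norm_inner_left f]
    refine (Finset.sum_subset (Finset.subset_univ B) fun j _ hj => ?_).symm
    have h0 : ⟪f, c j⟫_ℂ = 0 := by simpa [B] using hj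
    simp [h0]
  rw [hsum, hB, ← nsmul_eq_mul]
  exact Finset.sum_le_card_nsmul _ _ _ fun j _ => hf j

/-- Let `V` be a finite-dimensional complex inner product space with orthonormal
bases `(b_i)_{i∈I}` and `(c_j)_{j∈J}`, and let
`μ = max{|⟨b_i, c_j⟩| : i ∈ I, j ∈ J}`.  Then `μ ≥ 1/√(dim V)`, and for every
nonzero `f ∈ V` the numbers of nonzero coefficients of `f` in the two bases
satisfy `(#{i : ⟨f, b_i⟩ ≠ 0})·(#{j : ⟨f, c_j⟩ ≠ 0}) ≥ 1/μ²`. -/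
theorem two_basis_uncertainty (V : Type*) [NormedAddCommGroup V]
    [InnerProductSpace ℂ V] [FiniteDimensional ℂ V]
    (I J : Type*) [Fintype I] [Fintype J]
    (b : OrthonormalBasis I ℂ V) (c : OrthonormalBasis J ℂ V)
    (μ : ℝ)
    (hμ : IsGreatest {x : ℝ | ∃ (i : I) (j : J), x = ‖⟪b i, c j⟫_ℂ‖} μ) :
    1 / Real.sqrt (Module.finrank ℂ V) ≤ μ ∧
    ∀ f : V, f ≠ 0 →
      1 / μ ^ 2 ≤
        ({i : I | ⟪f, b i⟫_ℂ ≠ 0}.ncard : ℝ) * ({j : J | ⟪f, c j⟫_ℂ ≠ 0}.ncard : ℝ) := by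
  obtain ⟨⟨i₀, j₀, hij⟩, hmax⟩ := hμ
  have hle : ∀ i j, ‖⟪b i, c j⟫_ℂ‖ ≤ μ := fun i j => hmax ⟨i, j, rfl⟩
  have hμ0 : 0 ≤ μ := hij ▸ norm_nonneg _
  refine ⟨?_, fun f hf => ?_⟩
  · have hsq : 1 ≤ (Module.finrank ℂ V : ℝ) * μ ^ 2 := by
      have h := c.norm_sq_le_ncard_mul (C := μ ^ 2) (b i₀)
        fun j => pow_le_pow_left₀ (norm_nonneg _) (hle i₀ j) 2
      rw [b.norm_eq_one, one_pow] at h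
      refine h.trans (mul_le_mul_of_nonneg_right ?_ (sq_nonneg μ))
      rw [Module.finrank_eq_card_basis c.toBasis, ← Nat.card_eq_fintype_card]
      exact_mod_cast Set.ncard_le_card _
    refine div_le_of_le_mul₀ (Real.sqrt_nonneg _) hμ0 ?_
    refine (one_le_sq_iff₀ (by positivity)).mp ?_
    rwa [mul_pow, Real.sq_sqrt (Nat.cast_nonneg _), mul_comm]
  · have h := c.norm_sq_le_ncard_mul f
      fun j => b.norm_inner_sq_le_ncard_mul f (c j) fun i => hle i j
    have hpos : 0 < ‖f‖ ^ 2 := by positivity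
    refine div_le_of_le_mul₀ (sq_nonneg μ) (by positivity) ?_
    refine le_of_mul_le_mul_right ?_ hpos
    linarith
end
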